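/- Let α ∈ (0,2) and β > 0, and define S_{α,β}(ω) = −(1/π) Im ∫₀^∞ e^{−ωu} (1 + e^{iπα/2} u^α)^{−β} du for ω > 0 (principal branch of the complex power). Then lim_{ω→∞} ω^{α+1} S_{α,β}(ω) = (β/π) Γ(α+1) sin(πα/2). That is, the spectral density of the one-dimensional GFGCC satisfies S_{α,β}(ω) ~ (β/π) Γ(α+1) sin(πα/2) ω^{−α−1} as ω → ∞. -/

import Mathlib

open Filter

/-- Spectral density of the one-dimensional GFGCC (Laplace-type representation),
`S_{α,β}(ω) = −(1/π) Im ∫₀^∞ e^{−ωu}(1 + e^{iπα/2}u^α)^{−β} du` (principal branch). -/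
noncomputable def gfgccSpectralDensity (α β ω : ℝ) : ℝ :=
  -(1 / Real.pi) * (∫ u in Set.Ioi (0 : ℝ),
      Complex.exp (-(ω * u : ℝ)) *
        (1 + Complex.exp ((Real.pi : ℂ) * (α : ℂ) / 2 * Complex.I) * (u : ℂ) ^ (α : ℂ))
          ^ (-(β : ℂ))).im

open MeasureTheory

theorem gfgcc_spectral_high_frequency (α β : ℝ)
    (hα : α ∈ Set.Ioo (0 : ℝ) 2) (hβ : 0 < β) :
    Tendsto (fun ω : ℝ => ω ^ (α + 1) * gfgccSpectralDensity α β ω) atTop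
      (nhds (β / Real.pi * Real.Gamma (α + 1) * Real.sin (Real.pi * α / 2))) := by
  obtain ⟨h0, h2⟩ := hα
  set s := Real.sin (Real.pi * α / 2) with hs
  have hpi := Real.pi_pos
  have hspos : 0 < s := Real.sin_pos_of_pos_of_lt_pi (by positivity) (by nlinarith)
  set c : ℂ := Complex.exp ((Real.pi : ℂ) * (α : ℂ) / 2 * Complex.I) with hc
  have hcim : c.im = s := by
    have : ((Real.pi : ℂ) * (α : ℂ) / 2) = ((Real.pi * α / 2 : ℝ) : ℂ) := by push_cast; rfl
    rw [hc, this, Complex.exp_ofReal_mul_I_im]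
  have hcre : c.re = Real.cos (Real.pi * α / 2) := by
    have : ((Real.pi : ℂ) * (α : ℂ) / 2) = ((Real.pi * α / 2 : ℝ) : ℂ) := by push_cast; rfl
    rw [hc, this, Complex.exp_ofReal_mul_I_re]
  have hcn : ‖c‖ = 1 := by
    have : ((Real.pi : ℂ) * (α : ℂ) / 2) = ((Real.pi * α / 2 : ℝ) : ℂ) := by push_cast; rfl
    rw [hc, this, Complex.norm_exp_ofReal_mul_I]
  have hslit : ∀ x : ℝ, 0 ≤ x → (1 + c * (x : ℂ)) ∈ Complex.slitPlane := by
    intro x hx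
    rcases hx.eq_or_lt with rfl | hx
    · simp
    · right
      simp only [Complex.add_im, Complex.one_im, Complex.mul_im, Complex.ofReal_im,
        Complex.ofReal_re, hcim]
      have := mul_pos hspos hx
      simp [this.ne', hspos.ne', hx.ne']
  have hlow : ∀ x : ℝ, s ≤ ‖1 + c * (x : ℂ)‖ := by
    intro x
    have h1 : ‖1 + c * (x : ℂ)‖ ^ 2 = (1 + c.re * x) ^ 2 + (s * x) ^ 2 := by
      rw [Complex.sq_norm, Complex.normSq_apply]
      simp [hcim]; ring
    have h3 : s ^ 2 + c.re ^ 2 = 1 := by rw [hcre]; exact Real.sin_sq_add_cos_sq _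
    refine (pow_le_pow_iff_left₀ hspos.le (norm_nonneg _) two_ne_zero).1 ?_
    rw [h1]
    nlinarith [sq_nonneg (x + c.re)]
  set F : ℝ → ℂ := fun x => (1 + c * (x : ℂ)) ^ (-(β : ℂ)) with hF
  have hderiv : ∀ x : ℝ, 0 ≤ x →
      HasDerivAt F (-(β : ℂ) * (1 + c * (x : ℂ)) ^ (-(β : ℂ) - 1) * c) x := by
    intro x hx
    have h1 : HasDerivAt (fun y : ℂ => 1 + c * y) c (x : ℂ) := by
      simpa using ((hasDerivAt_id (x : ℂ)).const_mul c).const_add 1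
    exact (HasDerivAt.cpow_const (f := fun y : ℂ => 1 + c * y) (c := -(β : ℂ))
      h1 (hslit x hx)).comp_ofReal
  set C := β * s ^ (-β - 1) with hC
  have hpow : ∀ x r : ℝ, 0 ≤ r → ‖(1 + c * (x : ℂ)) ^ (-(r : ℂ))‖ ≤ s ^ (-r) := by
    intro x r hr
    rw [← Complex.ofReal_neg, Complex.norm_cpow_real]
    exact Real.rpow_le_rpow_of_nonpos hspos (hlow x) (by linarith)
  have hLip : ∀ x : ℝ, 0 ≤ x → ‖F x - 1‖ ≤ C * x := by
    intro x hx
    have := (convex_Ici (0:ℝ)).norm_image_sub_le_of_norm_hasDerivWithin_le (f := F) (C := C)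
      (fun y hy => (hderiv y hy).hasDerivWithinAt) (fun y _ => ?_)
      (Set.mem_Ici.2 le_rfl) (Set.mem_Ici.2 hx)
    · simpa [hF, abs_of_nonneg hx] using this
    · have h1 := hpow y (β + 1) (by linarith)
      have e : -(β : ℂ) - 1 = -((β + 1 : ℝ) : ℂ) := by push_cast; ring
      rw [norm_mul, norm_mul, hcn, mul_one, norm_neg, Complex.norm_real, Real.norm_of_nonneg hβ.le,
        e, hC, show -β - 1 = -(β + 1) by ring]
      gcongr
  have hIm : ∀ x : ℝ, 0 ≤ x → |(F x).im| ≤ C * x := by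
    intro x hx
    have := (Complex.abs_im_le_norm (F x - 1)).trans (hLip x hx)
    simpa using this
  have hImd : HasDerivAt (fun x => (F x).im) (-β * s) 0 := by
    have h1 := Complex.imCLM.hasFDerivAt.comp_hasDerivAt (0:ℝ) (hderiv 0 le_rfl)
    have e : Complex.imCLM (-(β : ℂ) * (1 + c * ((0:ℝ) : ℂ)) ^ (-(β : ℂ) - 1) * c) = -β * s := by
      simp [hcim]
    rw [e] at h1
    exact h1
  have hFc : ContinuousOn F (Set.Ici 0) := fun x hx => (hderiv x hx).continuousAt.continuousWithinAt
  have hGc : ∀ ω : ℝ, 0 < ω → ContinuousOn (fun v : ℝ => F ((v / ω) ^ α)) (Set.Ioi 0) := by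
    intro ω hω
    refine hFc.comp (Continuous.continuousOn ?_) (fun v hv => ?_)
    · exact (continuous_id.div_const ω).rpow_const (fun _ => Or.inr h0.le)
    · have hv : 0 < v := hv
      exact Set.mem_Ici.2 (by positivity)
  have hint : ∀ ω : ℝ, 0 < ω →
      ω ^ (α + 1) * gfgccSpectralDensity α β ω =
      -(1 / Real.pi) * ∫ v in Set.Ioi (0:ℝ), Real.exp (-v) * (ω ^ α * (F ((v / ω) ^ α)).im) := by
    intro ω hω
    have e1 : (∫ u in Set.Ioi (0 : ℝ), Complex.exp (-(ω * u : ℝ)) *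
        (1 + c * (u : ℂ) ^ (α : ℂ)) ^ (-(β : ℂ)))
        = ∫ u in Set.Ioi (0 : ℝ), (Real.exp (-(ω * u)) : ℂ) * F (((ω * u) / ω) ^ α) := by
      refine setIntegral_congr_fun measurableSet_Ioi (fun u hu => ?_)
      have hu : 0 < u := hu
      simp only [hF]
      rw [mul_div_cancel_left₀ _ hω.ne', Complex.ofReal_cpow hu.le]
      push_cast
      rfl
    have e2 := integral_comp_mul_left_Ioi (fun v : ℝ => (Real.exp (-v) : ℂ) * F ((v / ω) ^ α)) 0 hω
    have hI : IntegrableOn (fun v : ℝ => (Real.exp (-v) : ℂ) * F ((v / ω) ^ α)) (Set.Ioi 0) := by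
      have hb : IntegrableOn (fun v : ℝ => Real.exp (-v) * s ^ (-β)) (Set.Ioi 0) :=
        (integrableOn_exp_neg_Ioi 0).mul_const _
      refine Integrable.mono' hb ?_ ?_
      · refine ContinuousOn.aestronglyMeasurable ?_ measurableSet_Ioi
        exact (Continuous.continuousOn (by fun_prop)).mul (hGc ω hω)
      · refine ae_of_all _ (fun v => ?_)
        rw [norm_mul, Complex.norm_real, Real.norm_of_nonneg (Real.exp_pos _).le]
        have := hpow ((v / ω) ^ α) β hβ.le
        gcongr
    have e3 : (∫ v in Set.Ioi (0:ℝ), (Real.exp (-v) : ℂ) * F ((v / ω) ^ α)).im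
        = ∫ v in Set.Ioi (0:ℝ), Real.exp (-v) * (F ((v / ω) ^ α)).im := by
      have := integral_im hI
      simp only [RCLike.im_to_complex] at this
      rw [← this]
      simp only [Complex.re_ofReal_mul, Complex.im_ofReal_mul]
    unfold gfgccSpectralDensity
    rw [← hc, e1, e2, mul_zero, Complex.smul_im, e3, Real.rpow_add_one hω.ne']
    have e4 : ∀ v : ℝ, Real.exp (-v) * (ω ^ α * (F ((v / ω) ^ α)).im)
      = ω ^ α * (Real.exp (-v) * (F ((v / ω) ^ α)).im) := fun v => by ring
    simp only [e4]
    rw [integral_const_mul, smul_eq_mul]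
    field_simp
  have hlim : Tendsto (fun ω : ℝ => ∫ v in Set.Ioi (0:ℝ),
      Real.exp (-v) * (ω ^ α * (F ((v / ω) ^ α)).im)) atTop
      (nhds (∫ v in Set.Ioi (0:ℝ), Real.exp (-v) * (v ^ α * (-β * s)))) := by
    have hG := Real.GammaIntegral_convergent (s := α + 1) (by linarith)
    rw [add_sub_cancel_right] at hG
    refine tendsto_integral_filter_of_dominated_convergence
      (fun v => Real.exp (-v) * v ^ α * C) ?_ ?_ (hG.mul_const C) ?_
    · filter_upwards [eventually_gt_atTop 0] with ω hω
      refine ContinuousOn.aestronglyMeasurable ?_ measurableSet_Ioi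
      refine (Continuous.continuousOn (by fun_prop)).mul (continuousOn_const.mul ?_)
      exact Complex.continuous_im.comp_continuousOn (hGc ω hω)
    · filter_upwards [eventually_gt_atTop 0] with ω hω
      refine (ae_restrict_iff' measurableSet_Ioi).2 (ae_of_all _ (fun v hv => ?_))
      have hv : 0 < v := hv
      have hw : 0 < ω ^ α := by positivity
      rw [norm_mul, norm_mul, Real.norm_of_nonneg (Real.exp_pos _).le, Real.norm_of_nonneg hw.le,
        Real.norm_eq_abs, mul_assoc]
      refine mul_le_mul_of_nonneg_left ?_ (Real.exp_pos _).le
      have h1 := hIm ((v / ω) ^ α) (by positivity)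
      calc _ ≤ ω ^ α * (C * (v / ω) ^ α) := by gcongr
        _ = v ^ α * C := by rw [Real.div_rpow hv.le hω.le]; field_simp
    · refine (ae_restrict_iff' measurableSet_Ioi).2 (ae_of_all _ (fun v hv => ?_))
      have hv : 0 < v := hv
      refine Tendsto.const_mul _ ?_
      have hy : Tendsto (fun ω : ℝ => (v / ω) ^ α) atTop (nhdsWithin 0 {0}ᶜ) := by
        refine tendsto_nhdsWithin_iff.2 ⟨?_, ?_⟩
        · have := (tendsto_id.const_div_atTop v).rpow_const (p := α) (Or.inr h0.le)
          rwa [Real.zero_rpow h0.ne'] at this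
        · filter_upwards [eventually_gt_atTop 0] with ω hω
          have : 0 < (v / ω) ^ α := by positivity
          exact this.ne'
      have h1 := ((hasDerivAt_iff_tendsto_slope.1 hImd).comp hy).const_mul (v ^ α)
      refine h1.congr' ?_
      filter_upwards [eventually_gt_atTop 0] with ω hω
      have hF0 : (F 0).im = 0 := by simp [hF]
      simp only [Function.comp, slope_def_field, hF0, sub_zero]
      rw [Real.div_rpow hv.le hω.le]
      have hw : 0 < ω ^ α := by positivity
      have hw : 0 < v ^ α := by positivity
      field_simp
  have hval : -(1 / Real.pi) * ∫ v in Set.Ioi (0:ℝ), Real.exp (-v) * (v ^ α * (-β * s))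
      = β / Real.pi * Real.Gamma (α + 1) * s := by
    rw [Real.Gamma_eq_integral (by linarith), add_sub_cancel_right]
    simp only [← mul_assoc]
    rw [integral_mul_const, integral_mul_const]
    ring
  rw [← hval]
  refine (hlim.const_mul _).congr' ?_
  filter_upwards [eventually_gt_atTop 0] with ω hω
  exact (hint ω hω).symm
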